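/- For every integer j ≥ 57 and every positive integer m, the number m + j is the sum of exactly j positive fifth powers if and only if m + 57 is the sum of exactly 57 positive fifth powers. -/

import Mathlib

/-- A positive integer `n` is `(j,k)`-representable if it is a sum of exactly `j`
positive `k`-th powers. -/
def IsRepr (n j k : ℕ) : Prop :=
  ∃ a : Fin j → ℕ, (∀ i, 0 < a i) ∧ ∑ i, (a i) ^ k = n

/-- A number split off by one fifth power is a sum of one more fifth power. -/
theorem isRepr_succ_iff {n k : ℕ} :
    IsRepr n (k + 1) 5 ↔ ∃ x n', 0 < x ∧ IsRepr n' k 5 ∧ n = n' + x ^ 5 := by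
  constructor
  · rintro ⟨a, ha, rfl⟩
    exact ⟨a 0, ∑ i : Fin k, a i.succ ^ 5, ha 0, ⟨fun i => a i.succ, fun i => ha _, rfl⟩,
      by rw [Fin.sum_univ_succ, add_comm]⟩
  · rintro ⟨x, _, hx, ⟨a, ha, rfl⟩, rfl⟩
    refine ⟨Fin.cons x a, fun i => Fin.cases hx ha i, ?_⟩
    rw [Fin.sum_univ_succ, add_comm]
    simp

theorem isRepr_zero_iff {n : ℕ} : IsRepr n 0 5 ↔ n = 0 := by
  simp [IsRepr, eq_comm]

theorem IsRepr.add {m n j k : ℕ} (hm : IsRepr m j 5) (hn : IsRepr n k 5) :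
    IsRepr (m + n) (j + k) 5 := by
  induction k generalizing n with
  | zero => rwa [isRepr_zero_iff.1 hn]
  | succ k ih =>
    obtain ⟨x, n', hx, hn', rfl⟩ := isRepr_succ_iff.1 hn
    exact isRepr_succ_iff.2 ⟨x, m + n', hx, ih hn', by ring⟩

theorem isRepr_pow {x : ℕ} (hx : 0 < x) : IsRepr (x ^ 5) 1 5 :=
  ⟨fun _ => x, fun _ => hx, by simp⟩

theorem isRepr_self (k : ℕ) : IsRepr k k 5 :=
  ⟨fun _ => 1, fun _ => one_pos, by simp⟩

theorem IsRepr.scale {n k c : ℕ} (hn : IsRepr n k 5) (hc : 0 < c) :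
    IsRepr (c ^ 5 * n) k 5 := by
  obtain ⟨a, ha, rfl⟩ := hn
  exact ⟨fun i => c * a i, fun i => Nat.mul_pos hc (ha i), by
    simp only [_root_.mul_pow, Finset.mul_sum]⟩

theorem IsRepr.le {n k : ℕ} (h : IsRepr n k 5) : k ≤ n := by
  obtain ⟨a, ha, rfl⟩ := h
  calc k = ∑ _i : Fin k, 1 := by simp
    _ ≤ _ := Finset.sum_le_sum fun i _ => Nat.one_le_pow _ _ (ha i)

/-- Padding with ones. -/
theorem IsRepr.mono {m j k : ℕ} (h : IsRepr (m + j) j 5) (hjk : j ≤ k) :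
    IsRepr (m + k) k 5 := by
  obtain ⟨d, rfl⟩ := Nat.exists_eq_add_of_le hjk
  simpa [add_assoc] using h.add (isRepr_self d)

/-! ### Small numbers: bit sets of shifted representable numbers -/

/-- The union of the translates of the bit set `S` by `y ^ 5 - 1`, for `1 ≤ y ≤ x`. -/
def translates (S : ℕ) : ℕ → ℕ
  | 0 => 0
  | x + 1 => translates S x ||| S <<< ((x + 1) ^ 5 - 1)

/-- Bit set of those `m < 300000` for which `m + k` is a sum of `k` positive fifth powers. -/
def reprBits : ℕ → ℕ
  | 0 => 1
  | k + 1 => translates (reprBits k) 12 % 2 ^ 300000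

theorem testBit_translates (S x m : ℕ) :
    (translates S x).testBit m = true ↔
      ∃ y m', 0 < y ∧ y ≤ x ∧ S.testBit m' = true ∧ m + 1 = m' + y ^ 5 := by
  induction x with
  | zero => simp only [translates, Nat.zero_testBit]; constructor <;> intro h <;> grind
  | succ x ih =>
    have hpos : 0 < (x + 1) ^ 5 := by positivity
    rw [translates, Nat.testBit_or, Bool.or_eq_true, ih, Nat.testBit_shiftLeft,
      Bool.and_eq_true, decide_eq_true_iff]
    constructor
    · rintro (⟨y, m', h1, h2, h3, h4⟩ | ⟨h1, h2⟩)
      · exact ⟨y, m', h1, by omega, h3, h4⟩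
      · exact ⟨x + 1, _, by omega, le_rfl, h2, by omega⟩
    · rintro ⟨y, m', h1, h2, h3, h4⟩
      rcases Nat.lt_or_ge x y with h | h
      · obtain rfl : y = x + 1 := by omega
        refine Or.inr ⟨by omega, ?_⟩
        rwa [show m - ((x + 1) ^ 5 - 1) = m' by omega]
      · exact Or.inl ⟨y, m', h1, h, h3, h4⟩

theorem testBit_reprBits (k m : ℕ) :
    (reprBits k).testBit m = true ↔ m < 300000 ∧ IsRepr (m + k) k 5 := by
  induction k generalizing m with
  | zero =>
    rw [reprBits, isRepr_zero_iff, Nat.testBit_one_eq_true_iff_self_eq_zero]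
    omega
  | succ k ih =>
    rw [reprBits, Nat.testBit_mod_two_pow, Bool.and_eq_true, decide_eq_true_iff,
      testBit_translates, isRepr_succ_iff]
    refine and_congr_right fun hm => ⟨?_, ?_⟩
    · rintro ⟨y, m', h1, -, h3, h4⟩
      exact ⟨y, m' + k, h1, ((ih m').1 h3).2, by omega⟩
    · rintro ⟨y, n', h1, h2, h3⟩
      have hk : k ≤ n' := h2.le
      have hy5 : 0 < y ^ 5 := by positivity
      have hy : y ≤ 12 := by
        by_contra! h
        have := Nat.pow_le_pow_left (show 13 ≤ y from h) 5
        omega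
      refine ⟨y, n' - k, h1, hy, (ih _).2 ⟨by omega, ?_⟩, by omega⟩
      rwa [Nat.sub_add_cancel hk]

theorem reprBits_stable : reprBits 58 = reprBits 57 := by decide +kernel

theorem reprBits_full : reprBits 20 >>> 150000 = 2 ^ 150000 - 1 := by decide +kernel

/-- The union of the `615`-bit blocks of the bit set `S` with index less than `i`. -/
def foldBlocks (S : ℕ) : ℕ → ℕ
  | 0 => 0
  | i + 1 => foldBlocks S i ||| (S >>> (615 * i)) % 2 ^ 615

theorem foldBlocks_reprBits : foldBlocks (reprBits 6) 293 = 2 ^ 615 - 1 := by decide +kernel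

theorem exists_of_testBit_foldBlocks {S i r : ℕ} (h : (foldBlocks S i).testBit r = true) :
    ∃ q, S.testBit (615 * q + r) = true := by
  induction i with
  | zero => simp [foldBlocks] at h
  | succ i ih =>
    rw [foldBlocks, Nat.testBit_or, Bool.or_eq_true, Nat.testBit_mod_two_pow, Bool.and_eq_true,
      Nat.testBit_shiftRight] at h
    exact h.elim ih fun h => ⟨i, h.2⟩

/-- Six fifth powers cover all residues modulo `615`. -/
theorem exists_isRepr_six (q : ℤ) : ∃ n : ℕ, IsRepr n 6 5 ∧ n < 2 ^ 19 ∧ (615 : ℤ) ∣ q - n := by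
  have hr0 := Int.emod_nonneg (q - 6) (show (615 : ℤ) ≠ 0 by norm_num)
  have hr1 := Int.emod_lt_of_pos (q - 6) (show (0 : ℤ) < 615 by norm_num)
  obtain ⟨r, hr⟩ := Int.eq_ofNat_of_zero_le hr0
  have hr' : r < 615 := by omega
  obtain ⟨i, hi⟩ := exists_of_testBit_foldBlocks (S := reprBits 6) (i := 293) (r := r)
    (by rw [foldBlocks_reprBits, Nat.testBit_two_pow_sub_one]; simpa using hr')
  obtain ⟨h1, h2⟩ := (testBit_reprBits _ _).1 hi
  refine ⟨_, h2, by omega, ?_⟩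
  push_cast
  omega

/-! ### Ascent to long intervals -/

/-- Every `m` in `[A, A + B)` is, up to the shift by `s`, a sum of `s` positive fifth powers. -/
def Covers (s A B : ℕ) : Prop :=
  ∀ m, A ≤ m → m < A + B → IsRepr (m + s) s 5

theorem Covers.shrink {s A B B' : ℕ} (h : Covers s A B) (hB : B' ≤ B) : Covers s A B' :=
  fun m h1 h2 => h m h1 (by omega)

theorem add_one_pow_five_le {x y : ℕ} (h : x ≤ y) :
    (x + 1) ^ 5 + y ^ 5 ≤ (y + 1) ^ 5 + x ^ 5 := by
  have h2 := Nat.pow_le_pow_left h 2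
  have h3 := Nat.pow_le_pow_left h 3
  have h4 := Nat.pow_le_pow_left h 4
  nlinarith

theorem Covers.step {s A B : ℕ} (h : Covers s A B) (x : ℕ) (hx : 0 < x)
    (hB : (x + 1) ^ 5 ≤ B + x ^ 5) : Covers (s + 1) A (B + x ^ 5 - 1) := by
  intro m h1 h2
  have hx5 : 0 < x ^ 5 := by positivity
  set y := Nat.findGreatest (fun y => A + y ^ 5 ≤ m + 1) x with hy
  have hy0 : A + y ^ 5 ≤ m + 1 :=
    Nat.findGreatest_spec (P := fun y => A + y ^ 5 ≤ m + 1) (m := 1) hx (by omega)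
  have hy1 : 1 ≤ y := Nat.le_findGreatest hx (by omega)
  have hyx : y ≤ x := Nat.findGreatest_le x
  have key : m + 1 < A + y ^ 5 + B := by
    rcases hyx.eq_or_lt with h' | h'
    · rw [h']; omega
    · have := Nat.findGreatest_is_greatest (P := fun y => A + y ^ 5 ≤ m + 1) (n := x)
        (k := y + 1) (by omega) h'
      have := add_one_pow_five_le hyx
      omega
  exact isRepr_succ_iff.2 ⟨y, _, hy1, h (m + 1 - y ^ 5) (by omega) (by omega), by omega⟩

theorem Covers.step_two_pow {s A k : ℕ} (h : Covers s A (2 ^ (4 * k + 5))) :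
    Covers (s + 1) A (2 ^ (4 * ((5 * k - 5) / 4) + 5)) := by
  rcases Nat.eq_zero_or_pos k with rfl | hk
  · intro m h1 h2
    exact (h m h1 (by simpa using h2)).mono (Nat.le_succ s)
  have hpos : 0 < 2 ^ k := by positivity
  refine (h.step (2 ^ k) hpos ?_).shrink ?_
  · have e : 2 ^ (4 * k + 5) = 32 * (2 ^ k) ^ 4 := by rw [pow_add, pow_mul']; ring
    rw [e]
    generalize 2 ^ k = x at hpos
    have h1 : x ≤ x ^ 4 := Nat.le_self_pow (by norm_num) x
    have h2 : x ^ 2 ≤ x ^ 4 := Nat.pow_le_pow_right hpos (by norm_num)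
    have h3 : x ^ 3 ≤ x ^ 4 := Nat.pow_le_pow_right hpos (by norm_num)
    have h4 : 1 ≤ x ^ 4 := Nat.one_le_pow _ _ hpos
    nlinarith
  · have h1 : 2 ^ (4 * ((5 * k - 5) / 4) + 5) ≤ (2 ^ k) ^ 5 := by
      rw [← pow_mul]
      exact Nat.pow_le_pow_right two_pos (by omega)
    have h2 : 0 < 2 ^ (4 * k + 5) := by positivity
    omega

theorem Covers.iterate {s A k : ℕ} (h : Covers s A (2 ^ (4 * k + 5))) (t : ℕ) :
    Covers (s + t) A (2 ^ (4 * (fun i => (5 * i - 5) / 4)^[t] k + 5)) := by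
  induction t with
  | zero => exact h
  | succ t ih =>
    rw [Function.iterate_succ_apply']
    exact ih.step_two_pow

theorem covers_base : Covers 20 150000 150000 := by
  intro m h1 h2
  refine ((testBit_reprBits 20 m).1 ?_).2
  have : (reprBits 20 >>> 150000).testBit (m - 150000) = true := by
    rw [reprBits_full, Nat.testBit_two_pow_sub_one]
    exact decide_eq_true (by omega)
  rwa [Nat.testBit_shiftRight, Nat.add_sub_cancel' h1] at this

theorem covers_two_pow {k : ℕ} (hk : k ≤ 3600) : Covers 57 150000 (2 ^ k) := by
  have h := (((((((covers_base.step 12 (by norm_num) (by norm_num)).step 16 (by norm_num)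
    (by norm_num)).step 22 (by norm_num) (by norm_num)).step 33 (by norm_num)
    (by norm_num)).step 54 (by norm_num) (by norm_num)).step 99 (by norm_num)
    (by norm_num)).step 211 (by norm_num) (by norm_num)).step 540 (by norm_num) (by norm_num)
  have h' := (h.shrink (B' := 2 ^ (4 * 10 + 5)) (by norm_num)).iterate 26
  have e : 1118 ≤ (fun i => (5 * i - 5) / 4)^[26] 10 := by decide
  generalize (fun i => (5 * i - 5) / 4)^[26] 10 = c at e h'
  intro m h1 h2
  exact (h' m h1 (h2.trans_le (Nat.add_le_add_left
    (Nat.pow_le_pow_right two_pos (by omega)) _))).mono (by norm_num)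

/-! ### Two-adic residues -/

theorem exists_pow_five_sub_dvd {q : ℤ} (hq : Odd q) (k : ℕ) :
    ∃ y : ℕ, 0 < y ∧ y ≤ 2 ^ k ∧ (2 ^ k : ℤ) ∣ q - y ^ 5 := by
  suffices ∃ y : ℕ, Odd y ∧ y ≤ 2 ^ k ∧ (2 ^ k : ℤ) ∣ q - y ^ 5 by
    obtain ⟨y, h1, h2⟩ := this
    exact ⟨y, h1.pos, h2⟩
  induction k with
  | zero => exact ⟨1, odd_one, by simp, by simp⟩
  | succ k ih =>
    rcases Nat.eq_zero_or_pos k with rfl | hk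
    · obtain ⟨c, rfl⟩ := hq
      exact ⟨1, odd_one, by norm_num, ⟨c, by push_cast; ring⟩⟩
    obtain ⟨y, hodd, hle, c, hc⟩ := ih
    rcases Int.even_or_odd' c with ⟨d, rfl | rfl⟩
    · exact ⟨y, hodd, hle.trans (Nat.pow_le_pow_right two_pos k.le_succ), d, by rw [hc]; ring⟩
    · obtain ⟨j, rfl⟩ : ∃ j, k = j + 1 := Nat.exists_eq_add_of_le' hk
      obtain ⟨i, rfl⟩ := hodd
      refine ⟨2 * i + 1 + 2 ^ (j + 1), ⟨i + 2 ^ j, by ring⟩, by omega, ?_⟩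
      have e : (q - ((2 * i + 1 + 2 ^ (j + 1) : ℕ) : ℤ) ^ 5) =
          (q - ((2 * i + 1 : ℕ) : ℤ) ^ 5) - 5 * ((2 * i + 1 : ℕ) : ℤ) ^ 4 * 2 ^ (j + 1)
            - 2 ^ (j + 1) * 2 * (2 ^ j) * (10 * ((2 * i + 1 : ℕ) : ℤ) ^ 3
              + 10 * ((2 * i + 1 : ℕ) : ℤ) ^ 2 * 2 ^ (j + 1)
              + 5 * ((2 * i + 1 : ℕ) : ℤ) * (2 ^ (j + 1)) ^ 2 + (2 ^ (j + 1)) ^ 3) := by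
        push_cast
        ring
      rw [e, hc]
      refine dvd_sub ⟨d - (40 * i ^ 4 + 80 * i ^ 3 + 60 * i ^ 2 + 20 * i + 2), ?_⟩
        ⟨_, by rw [pow_succ _ (j + 1), mul_assoc]⟩
      push_cast
      ring

theorem exists_isRepr_two (q : ℤ) (k : ℕ) :
    ∃ n : ℕ, IsRepr n 2 5 ∧ n ≤ 2 * (2 ^ k) ^ 5 ∧ (2 ^ k : ℤ) ∣ q - n := by
  have h1 : 1 ≤ 2 ^ k := Nat.one_le_two_pow
  have aux : ∀ z : ℕ, 0 < z → z ≤ 2 ^ k → Odd (q - z ^ 5) →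
      ∃ n : ℕ, IsRepr n 2 5 ∧ n ≤ 2 * (2 ^ k) ^ 5 ∧ (2 ^ k : ℤ) ∣ q - n := by
    intro z hz hzk hodd
    obtain ⟨y, hy, hyk, hd⟩ := exists_pow_five_sub_dvd hodd k
    refine ⟨z ^ 5 + y ^ 5, (isRepr_pow hz).add (isRepr_pow hy), ?_, ?_⟩
    · have := Nat.pow_le_pow_left hzk 5
      have := Nat.pow_le_pow_left hyk 5
      omega
    · push_cast
      rwa [← sub_sub]
  rcases Int.even_or_odd q with hq | hq
  · exact aux 1 one_pos h1 (by simpa using hq.sub_odd odd_one)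
  · rcases Nat.eq_zero_or_pos k with rfl | hk
    · exact ⟨2, isRepr_self 2, by norm_num, by simp⟩
    · refine aux (2 ^ k) (by positivity) le_rfl (hq.sub_even ?_)
      push_cast
      exact ((even_two.pow_of_ne_zero hk.ne').pow_of_ne_zero (by norm_num))

/-- Every residue modulo `2 ^ e` is attained by a sum of `2 * j` positive fifth powers of
integers not exceeding `2 ^ s`. -/
def Clears (s j e : ℕ) : Prop :=
  ∀ n : ℤ, ∃ r : ℕ, IsRepr r (2 * j) 5 ∧ r ≤ 2 * j * (2 ^ s) ^ 5 ∧ (2 ^ e : ℤ) ∣ n - r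

theorem Clears.zero (s : ℕ) : Clears s 0 0 :=
  fun n => ⟨0, isRepr_zero_iff.2 rfl, by simp, by simp⟩

theorem Clears.step {s j e : ℕ} (h : Clears s j e) (u : ℕ) (hu : 5 * u ≤ e) (hus : u ≤ s) :
    Clears s (j + 1) (s + 4 * u) := by
  intro n
  obtain ⟨r, hr, hrs, hd⟩ := h n
  obtain ⟨q, hq⟩ := (pow_dvd_pow (2 : ℤ) hu).trans hd
  obtain ⟨k, rfl⟩ := Nat.exists_eq_add_of_le hus
  obtain ⟨m, hm, hmk, c, hc⟩ := exists_isRepr_two q k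
  refine ⟨r + (2 ^ u) ^ 5 * m, hr.add (hm.scale (by positivity)), ?_, c, ?_⟩
  · calc r + (2 ^ u) ^ 5 * m
        ≤ 2 * j * (2 ^ (u + k)) ^ 5 + (2 ^ u) ^ 5 * (2 * (2 ^ k) ^ 5) := by gcongr
      _ = 2 * (j + 1) * (2 ^ (u + k)) ^ 5 := by rw [pow_add 2 u k]; ring
  · push_cast
    rw [← sub_sub, hq, pow_mul', ← mul_sub, hc]
    rw [show u + k + 4 * u = 5 * u + k by ring, pow_add, pow_mul']
    ring

theorem clears_eight (w : ℕ) : Clears (100 * w) 8 (408 * w) := by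
  have h := (((((((Clears.zero (100 * w)).step 0 (by omega) (by omega)).step (20 * w) (by omega)
    (by omega)).step (36 * w) (by omega) (by omega)).step (48 * w) (by omega) (by omega)).step
    (58 * w) (by omega) (by omega)).step (66 * w) (by omega) (by omega)).step (72 * w) (by omega)
    (by omega) |>.step (77 * w) (by omega) (by omega)
  rwa [show 100 * w + 4 * (77 * w) = 408 * w by ring] at h

/-- Every residue modulo `2460 * 2 ^ (400 * w)` is attained by a small sum of `22` positive fifth
powers. -/
theorem exists_isRepr_residue {w : ℕ} (hw : 1 ≤ w) (n : ℤ) :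
    ∃ r : ℕ, IsRepr r 22 5 ∧ r ≤ 17 * (2 ^ (100 * w)) ^ 5 ∧
      (2460 * (2 ^ (100 * w)) ^ 4 : ℤ) ∣ n - r := by
  obtain ⟨r, hr, hrs, hd⟩ := clears_eight w n
  obtain ⟨q, hq⟩ := (pow_dvd_pow (2 : ℤ) (show 5 * (80 * w + 1) ≤ 408 * w by omega)).trans hd
  obtain ⟨m, hm, hm1, c, hc⟩ := exists_isRepr_six q
  refine ⟨r + (2 ^ (80 * w + 1)) ^ 5 * m, hr.add (hm.scale (by positivity)), ?_, 8 * c, ?_⟩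
  · have h1 : (2 ^ (80 * w + 1)) ^ 5 * m ≤ (2 ^ (100 * w)) ^ 5 :=
      calc (2 ^ (80 * w + 1)) ^ 5 * m ≤ (2 ^ (80 * w + 1)) ^ 5 * 2 ^ 19 := by gcongr
        _ = 2 ^ ((80 * w + 1) * 5 + 19) := by rw [← pow_mul, ← pow_add]
        _ ≤ (2 ^ (100 * w)) ^ 5 := by
          rw [← pow_mul]
          exact Nat.pow_le_pow_right two_pos (by omega)
    omega
  · push_cast
    rw [← sub_sub, hq, pow_mul', ← mul_sub, hc, ← pow_mul, ← pow_mul,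
      show (80 * w + 1) * 5 = 100 * w * 4 + 5 by ring, pow_add]
    ring

/-! ### A linear form in sums of `31` fifth powers -/

theorem exists_isRepr_four {x : ℕ} {a b : ℤ} (h : 2 * (a ^ 2 + b ^ 2) < x ^ 2) :
    ∃ p : ℕ, IsRepr p 4 5 ∧
      (p : ℤ) = (x + (a + b)) ^ 5 + (x - (a + b)) ^ 5 + (x + (a - b)) ^ 5 + (x - (a - b)) ^ 5 := by
  have h1 := abs_lt_of_sq_lt_sq' (show (a + b) ^ 2 < (x : ℤ) ^ 2 by nlinarith [sq_nonneg (a - b)])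
    (by positivity)
  have h2 := abs_lt_of_sq_lt_sq' (show (a - b) ^ 2 < (x : ℤ) ^ 2 by nlinarith [sq_nonneg (a + b)])
    (by positivity)
  obtain ⟨y₁, e₁⟩ := Int.eq_ofNat_of_zero_le (show 0 ≤ (x : ℤ) + (a + b) by omega)
  obtain ⟨y₂, e₂⟩ := Int.eq_ofNat_of_zero_le (show 0 ≤ (x : ℤ) - (a + b) by omega)
  obtain ⟨y₃, e₃⟩ := Int.eq_ofNat_of_zero_le (show 0 ≤ (x : ℤ) + (a - b) by omega)
  obtain ⟨y₄, e₄⟩ := Int.eq_ofNat_of_zero_le (show 0 ≤ (x : ℤ) - (a - b) by omega)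
  refine ⟨y₁ ^ 5 + y₂ ^ 5 + y₃ ^ 5 + y₄ ^ 5, (((isRepr_pow (by omega)).add
    (isRepr_pow (by omega))).add (isRepr_pow (by omega))).add (isRepr_pow (by omega)), ?_⟩
  rw [e₁, e₂, e₃, e₄]
  push_cast
  rfl

/-- Liouville's identity for sums of fourth powers, turned into one for fifth powers. -/
theorem isRepr_liouville {x n : ℕ} (h : 2 * n < x ^ 2) :
    IsRepr (24 * x ^ 5 + 120 * x ^ 3 * n + 60 * x * n ^ 2) 24 5 := by
  obtain ⟨a, b, c, d, rfl⟩ := Nat.sum_four_squares n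
  have key : ∀ s t : ℕ, s ^ 2 + t ^ 2 ≤ a ^ 2 + b ^ 2 + c ^ 2 + d ^ 2 →
      2 * ((s : ℤ) ^ 2 + (t : ℤ) ^ 2) < (x : ℤ) ^ 2 := by
    intro s t hst
    exact_mod_cast (Nat.mul_le_mul_left 2 hst).trans_lt h
  obtain ⟨p₁, h₁, e₁⟩ := exists_isRepr_four (key a b (by omega))
  obtain ⟨p₂, h₂, e₂⟩ := exists_isRepr_four (key a c (by omega))
  obtain ⟨p₃, h₃, e₃⟩ := exists_isRepr_four (key a d (by omega))
  obtain ⟨p₄, h₄, e₄⟩ := exists_isRepr_four (key b c (by omega))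
  obtain ⟨p₅, h₅, e₅⟩ := exists_isRepr_four (key b d (by omega))
  obtain ⟨p₆, h₆, e₆⟩ := exists_isRepr_four (key c d (by omega))
  have e : 24 * x ^ 5 + 120 * x ^ 3 * (a ^ 2 + b ^ 2 + c ^ 2 + d ^ 2)
      + 60 * x * (a ^ 2 + b ^ 2 + c ^ 2 + d ^ 2) ^ 2 = p₁ + p₂ + p₃ + p₄ + p₅ + p₆ := by
    zify
    rw [e₁, e₂, e₃, e₄, e₅, e₆]
    ring
  rw [e]
  exact ((((h₁.add h₂).add h₃).add h₄).add h₅).add h₆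

/-- Sums of `31` fifth powers representing a linear polynomial in `x`: the Liouville sum with
parameter `22 l² - 3 l x - x²` plus the fifth powers of `9 l - x`, `x`, `x + l` (three times),
`x + 4 l` and `2 x - l`. -/
theorem isRepr_linear {l x m : ℕ} (hl : 0 < l) (h1 : 3 * l ≤ x) (h2 : 5 * x ≤ 17 * l)
    (hm : m + 2460 * l ^ 4 * x = 60075 * l ^ 5) : IsRepr m 31 5 := by
  have hn : 0 ≤ 22 * (l : ℤ) ^ 2 - 3 * l * x - x ^ 2 := by
    zify at hl h1 h2
    nlinarith
  obtain ⟨n, hn⟩ : ∃ n : ℕ, _ = (n : ℤ) := Int.eq_ofNat_of_zero_le hn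
  obtain ⟨y, hy⟩ := Nat.exists_eq_add_of_lt (show x < 9 * l by omega)
  obtain ⟨z, hz⟩ := Nat.exists_eq_add_of_lt (show l < 2 * x by omega)
  have hnx : 2 * n < x ^ 2 := by
    zify at hl h1 h2 ⊢
    nlinarith
  have h := (isRepr_liouville hnx).add <|
    ((isRepr_pow (Nat.succ_pos y)).add (isRepr_pow (show 0 < x by omega))).add <|
    (((isRepr_pow (show 0 < x + l by omega)).add (isRepr_pow (show 0 < x + l by omega))).add
      (isRepr_pow (show 0 < x + l by omega))).add <|
    (isRepr_pow (show 0 < x + 4 * l by omega)).add (isRepr_pow (Nat.succ_pos z))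
  convert h using 1
  zify at hm hy hz ⊢
  have ey : (y : ℤ) + 1 = 9 * l - x := by linarith
  have ez : (z : ℤ) + 1 = 2 * x - l := by linarith
  rw [ey, ez, ← hn, eq_sub_of_add_eq hm]
  ring

/-! ### Large numbers -/

/-- A narrow window above `a` can be reached by subtracting one fifth power. -/
theorem exists_pow_five_window {n a l : ℕ} (hl : 0 < l) (ha : a < n) (hn : n ≤ l ^ 6) :
    ∃ y r, 0 < y ∧ n = y ^ 5 + r ∧ a ≤ r ∧ r ≤ a + 31 * l ^ 5 := by
  set y := Nat.findGreatest (fun y => a + y ^ 5 ≤ n) n with hy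
  have hy0 : a + y ^ 5 ≤ n :=
    Nat.findGreatest_spec (P := fun y => a + y ^ 5 ≤ n) (m := 1) (n := n) (by omega) (by omega)
  have hy1 : 1 ≤ y := Nat.le_findGreatest (by omega) (by omega)
  have hlt : n < a + (y + 1) ^ 5 := by
    by_contra! h
    have := Nat.le_self_pow (show 5 ≠ 0 by norm_num) (y + 1)
    have := Nat.le_findGreatest (P := fun y => a + y ^ 5 ≤ n) (show y + 1 ≤ n by omega) h
    omega
  have hyl : y ^ 4 ≤ l ^ 5 := by
    refine (Nat.pow_le_pow_iff_left (show 5 ≠ 0 by norm_num)).1 ?_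
    calc (y ^ 4) ^ 5 = (y ^ 5) ^ 4 := by ring
      _ ≤ (l ^ 6) ^ 4 := Nat.pow_le_pow_left (by omega) 4
      _ = l ^ 24 := by ring
      _ ≤ l ^ 25 := Nat.pow_le_pow_right hl (by norm_num)
      _ = (l ^ 5) ^ 5 := by ring
  have hgap : (y + 1) ^ 5 ≤ y ^ 5 + 31 * y ^ 4 := by
    have h1 : y ≤ y ^ 4 := Nat.le_self_pow (by norm_num) y
    have h2 : y ^ 2 ≤ y ^ 4 := Nat.pow_le_pow_right hy1 (by norm_num)
    have h3 : y ^ 3 ≤ y ^ 4 := Nat.pow_le_pow_right hy1 (by norm_num)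
    have h4 : 1 ≤ y ^ 4 := Nat.one_le_pow _ _ hy1
    nlinarith
  exact ⟨y, n - y ^ 5, hy1, by omega, by omega, by omega⟩

theorem isRepr_of_le_of_le {n w : ℕ} (hw : 1 ≤ w) (h1 : 52001 * (2 ^ (100 * w)) ^ 5 ≤ n)
    (h2 : n ≤ (2 ^ (100 * w)) ^ 6) : IsRepr n 54 5 := by
  have hl : 0 < 2 ^ (100 * w) := by positivity
  have res := fun k => exists_isRepr_residue hw k
  have cast : ((2 ^ (100 * w) : ℕ) : ℤ) = 2 ^ (100 * w) := by push_cast; rfl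
  rw [← cast] at res
  generalize 2 ^ (100 * w) = l at *
  have hl4 : 0 < l ^ 4 := by positivity
  have hl5 : l ^ 5 = l ^ 4 * l := pow_succ l 4
  obtain ⟨y, r, hy, rfl, hr1, hr2⟩ :=
    exists_pow_five_window hl (show 52000 * l ^ 5 < n by have := pow_pos hl 5; omega) h2
  obtain ⟨p, hp, hpl, x, hx⟩ := res (r - 60075 * l ^ 5)
  have hx' : (r : ℤ) - p + 2460 * l ^ 4 * (-x) = 60075 * l ^ 5 := by linarith
  obtain ⟨m, rfl⟩ := Nat.exists_eq_add_of_le (show p ≤ r by omega)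
  have hx3 : 3 * (l : ℤ) ≤ -x := by
    zify at hl4 hl5 hr1 hr2 hpl
    refine le_of_mul_le_mul_left (a := 2460 * (l : ℤ) ^ 4) ?_ (by positivity)
    push_cast at *
    nlinarith
  have hx17 : 5 * (-x) ≤ 17 * (l : ℤ) := by
    zify at hl4 hl5 hr1 hr2 hpl
    refine le_of_mul_le_mul_left (a := 2460 * (l : ℤ) ^ 4) ?_ (by positivity)
    push_cast at *
    nlinarith
  obtain ⟨x', e⟩ := Int.eq_ofNat_of_zero_le (show 0 ≤ -x by omega)
  rw [e] at hx' hx3 hx17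
  have hm : IsRepr m 31 5 := by
    refine isRepr_linear hl (x := x') (by omega) (by omega) ?_
    zify
    push_cast at hx'
    simpa using hx'
  exact (isRepr_pow hy).add (hp.add hm)

theorem isRepr_of_two_pow_le {n k : ℕ} (hk : 3600 ≤ k) (hkn : 2 ^ k ≤ n) :
    IsRepr n 54 5 := by
  have hpos : 0 < 2 ^ k := by positivity
  have hlog : k ≤ Nat.log 2 n := Nat.le_log_of_pow_le one_lt_two hkn
  have h1 : 2 ^ Nat.log 2 n ≤ n := Nat.pow_log_le_self 2 (by omega)
  have h2 : n < 2 ^ (Nat.log 2 n + 1) := Nat.lt_pow_succ_log_self one_lt_two n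
  generalize Nat.log 2 n = d at *
  refine isRepr_of_le_of_le (w := d / 600 + 1) (by omega) ?_ ?_
  · calc 52001 * (2 ^ (100 * (d / 600 + 1))) ^ 5
        ≤ 2 ^ 16 * (2 ^ (100 * (d / 600 + 1))) ^ 5 := by gcongr; norm_num
      _ = 2 ^ (16 + 100 * (d / 600 + 1) * 5) := by rw [← pow_mul, ← pow_add]
      _ ≤ 2 ^ d := Nat.pow_le_pow_right two_pos (by omega)
      _ ≤ n := h1
  · rw [← pow_mul]
    exact h2.le.trans (Nat.pow_le_pow_right two_pos (by omega))

/-! ### The main theorem -/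

theorem isRepr_add_fiftySeven_of_le {m : ℕ} (hm : 150000 ≤ m) : IsRepr (m + 57) 57 5 := by
  obtain ⟨k, hk⟩ : ∃ k, k = 3600 := ⟨_, rfl⟩
  rcases lt_or_ge m (2 ^ k) with h | h
  · exact covers_two_pow hk.le m hm (by omega)
  · exact (isRepr_of_two_pow_le (n := m + 54) hk.ge (by omega)).mono (by norm_num)

theorem isRepr_fiftySeven_of_fiftyEight {m : ℕ} (h : IsRepr (m + 58) 58 5) :
    IsRepr (m + 57) 57 5 := by
  rcases lt_or_ge m 150000 with hm | hm
  · have := (testBit_reprBits 58 m).2 ⟨by omega, h⟩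
    rw [reprBits_stable] at this
    exact ((testBit_reprBits 57 m).1 this).2
  · exact isRepr_add_fiftySeven_of_le hm

/-- for every `j ≥ 57` and every positive integer `m`, `m + j` is the
sum of exactly `j` positive fifth powers iff `m + 57` is the sum of exactly `57`
positive fifth powers. -/
theorem stmt_16 :
    ∀ j : ℕ, 57 ≤ j → ∀ m : ℕ, 0 < m →
      (IsRepr (m + j) j 5 ↔ IsRepr (m + 57) 57 5) := by
  intro j hj m _
  refine ⟨fun h => ?_, fun h => h.mono hj⟩
  induction j, hj using Nat.le_induction generalizing m with
  | base => exact h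
  | succ j hj ih =>
    obtain ⟨x, n', hx, hn', e⟩ := isRepr_succ_iff.1 h
    have hle := hn'.le
    obtain ⟨m', rfl⟩ := Nat.exists_eq_add_of_le' hle
    rcases Nat.eq_zero_or_pos m' with rfl | hm'
    · exact isRepr_fiftySeven_of_fiftyEight (isRepr_succ_iff.2
        ⟨x, 57, hx, isRepr_self 57, by omega⟩)
    · exact isRepr_fiftySeven_of_fiftyEight (isRepr_succ_iff.2
        ⟨x, m' + 57, hx, ih m' hm' hn', by omega⟩)
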